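/- There exists a constant C ≥ 0 (depending only on X and k) such that for every ε ∈ [0, 1] and every Borel measurable function rd : ℝ → ℝ satisfying |rd(x) − x| ≤ ε·|x| for all x ∈ ℝ, one has |M_k[rd(X)] − M_k[X]| ≤ C·ε. -/

import Mathlib

open MeasureTheory

/-!
A perturbation of relative size `ε` moves the mean of `X` by at most `ε 𝔼|X|`, so it moves the
centered variable `X - 𝔼 X` pointwise by at most `ε (|X| + 𝔼|X|)`. Both centered variables are
bounded by `(1 + ε) (|X| + 𝔼|X|)`, and factoring out `a - b` from `a ^ k - b ^ k` bounds the
difference of their `k`-th powers by a multiple of `ε (|X| + 𝔼|X|) ^ k`, which is integrable.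
-/

open ProbabilityTheory

lemma abs_pow_sub_pow_le_of_abs_le_mul {R : Type*} [CommRing R] [LinearOrder R] [IsOrderedRing R]
    {a b r s t : R} {n : ℕ} (hn : n ≠ 0) (ha : |a| ≤ r * t) (hb : |b| ≤ r * t)
    (hab : |a - b| ≤ s * t) : |a ^ n - b ^ n| ≤ n * r ^ (n - 1) * s * t ^ n := by
  have hst : 0 ≤ s * t := (abs_nonneg _).trans hab
  calc |a ^ n - b ^ n| ≤ |a - b| * n * max |a| |b| ^ (n - 1) := abs_pow_sub_pow_le ..
    _ ≤ s * t * n * (r * t) ^ (n - 1) := by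
      gcongr
      exact max_le ha hb
    _ = n * r ^ (n - 1) * s * (t ^ (n - 1) * t) := by ring
    _ = n * r ^ (n - 1) * s * t ^ n := by rw [pow_sub_one_mul hn]

section Measure

variable {Ω : Type*} [MeasurableSpace Ω] {μ : Measure Ω} {k : ℕ}

lemma memLp_natCast_iff_integrable_norm_pow {E : Type*} [NormedAddCommGroup E] {f : Ω → E}
    (hk : k ≠ 0) (hf : AEStronglyMeasurable f μ) :
    MemLp f k μ ↔ Integrable (fun ω ↦ ‖f ω‖ ^ k) μ := by
  simpa using (integrable_norm_rpow_iff hf (Nat.cast_ne_zero.2 hk) (ENNReal.natCast_ne_top k)).symm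

lemma integrable_pow_of_memLp {𝕜 : Type*} [NormedDivisionRing 𝕜] {f : Ω → 𝕜} (hk : k ≠ 0)
    (hf : MemLp f k μ) : Integrable (fun ω ↦ f ω ^ k) μ :=
  (integrable_norm_iff (hf.aestronglyMeasurable.pow k)).1 <| by
    simpa only [Pi.pow_apply, norm_pow] using hf.integrable_norm_pow hk

lemma ae_norm_sub_integral_le {E : Type*} [NormedAddCommGroup E] [NormedSpace ℝ E] {f : Ω → E}
    {g : Ω → ℝ} (hg : Integrable g μ) (hfg : ∀ᵐ ω ∂μ, ‖f ω‖ ≤ g ω) :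
    ∀ᵐ ω ∂μ, ‖f ω - ∫ ω', f ω' ∂μ‖ ≤ g ω + ∫ ω', g ω' ∂μ := by
  filter_upwards [hfg] with ω hω
  exact norm_sub_le_of_le hω (norm_integral_le_of_norm_le hg hfg)

lemma ae_abs_sub_integral_le_mul {f g : Ω → ℝ} {c : ℝ} (hg : Integrable g μ)
    (hfg : ∀ᵐ ω ∂μ, |f ω| ≤ c * g ω) :
    ∀ᵐ ω ∂μ, |f ω - ∫ ω', f ω' ∂μ| ≤ c * (g ω + ∫ ω', g ω' ∂μ) := by
  simpa only [integral_const_mul, mul_add, Real.norm_eq_abs] using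
    ae_norm_sub_integral_le (f := f) (hg.const_mul c) hfg

lemma abs_integral_pow_sub_integral_pow_le {f g h : Ω → ℝ} {r s : ℝ} (hk : k ≠ 0)
    (hf : MemLp f k μ) (hg : MemLp g k μ) (hh : MemLp h k μ)
    (hfh : ∀ᵐ ω ∂μ, |f ω| ≤ r * h ω) (hgh : ∀ᵐ ω ∂μ, |g ω| ≤ r * h ω)
    (hfg : ∀ᵐ ω ∂μ, |f ω - g ω| ≤ s * h ω) :
    |∫ ω, f ω ^ k ∂μ - ∫ ω, g ω ^ k ∂μ| ≤ k * r ^ (k - 1) * s * ∫ ω, h ω ^ k ∂μ := by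
  rw [← integral_sub (integrable_pow_of_memLp hk hf) (integrable_pow_of_memLp hk hg),
    ← integral_const_mul, ← Real.norm_eq_abs]
  refine norm_integral_le_of_norm_le ((integrable_pow_of_memLp hk hh).const_mul _) ?_
  filter_upwards [hfh, hgh, hfg] with ω hf_le hg_le hsub_le
  exact abs_pow_sub_pow_le_of_abs_le_mul hk hf_le hg_le hsub_le

variable [IsFiniteMeasure μ] {X Y : Ω → ℝ}

lemma abs_centralMoment_sub_centralMoment_le {g : Ω → ℝ} {r s : ℝ} (hk : k ≠ 0)
    (hY : MemLp Y k μ) (hX : MemLp X k μ) (hg : MemLp g k μ)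
    (hYg : ∀ᵐ ω ∂μ, |Y ω| ≤ r * g ω) (hXg : ∀ᵐ ω ∂μ, |X ω| ≤ r * g ω)
    (hYX : ∀ᵐ ω ∂μ, |Y ω - X ω| ≤ s * g ω) :
    |centralMoment Y k μ - centralMoment X k μ| ≤
      k * r ^ (k - 1) * s * ∫ ω, (g ω + ∫ ω', g ω' ∂μ) ^ k ∂μ := by
  have one_le_k : (1 : ENNReal) ≤ k := mod_cast Nat.one_le_iff_ne_zero.2 hk
  have hg_int : Integrable g μ := hg.integrable one_le_k
  have centered_sub_le : ∀ᵐ ω ∂μ, |(Y ω - ∫ ω', Y ω' ∂μ) - (X ω - ∫ ω', X ω' ∂μ)| ≤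
      s * (g ω + ∫ ω', g ω' ∂μ) := by
    simpa only [integral_sub (hY.integrable one_le_k) (hX.integrable one_le_k), sub_sub_sub_comm]
      using ae_abs_sub_integral_le_mul hg_int hYX
  exact abs_integral_pow_sub_integral_pow_le hk (hY.sub (memLp_const _)) (hX.sub (memLp_const _))
    (hg.add (memLp_const _)) (ae_abs_sub_integral_le_mul hg_int hYg)
    (ae_abs_sub_integral_le_mul hg_int hXg) centered_sub_le

lemma abs_centralMoment_sub_centralMoment_le_of_abs_sub_le_mul_abs {ε : ℝ} (hk : k ≠ 0)
    (hX : MemLp X k μ) (hY : AEStronglyMeasurable Y μ)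
    (hYX : ∀ᵐ ω ∂μ, |Y ω - X ω| ≤ ε * |X ω|) :
    |centralMoment Y k μ - centralMoment X k μ| ≤
      k * (1 + ε) ^ (k - 1) * ε * ∫ ω, (|X ω| + ∫ ω', |X ω'| ∂μ) ^ k ∂μ := by
  have hY_le : ∀ᵐ ω ∂μ, |Y ω| ≤ (1 + ε) * |X ω| := by
    filter_upwards [hYX] with ω hω
    linarith [abs_sub_abs_le_abs_sub (Y ω) (X ω)]
  have hX_le : ∀ᵐ ω ∂μ, |X ω| ≤ (1 + ε) * |X ω| := by
    filter_upwards [hYX] with ω hω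
    linarith [abs_nonneg (Y ω - X ω)]
  exact abs_centralMoment_sub_centralMoment_le hk (hX.of_le_mul hY hY_le) hX hX.abs hY_le hX_le hYX

theorem centered_moments_first_order_mult_general (hk : k ≠ 0) (hX : MemLp X k μ) (R : ℝ) :
    ∃ C : ℝ, 0 ≤ C ∧ ∀ ε ∈ Set.Icc 0 R, ∀ Y : Ω → ℝ, AEStronglyMeasurable Y μ →
      (∀ᵐ ω ∂μ, |Y ω - X ω| ≤ ε * |X ω|) →
        |centralMoment Y k μ - centralMoment X k μ| ≤ C * ε := by
  refine ⟨k * (1 + |R|) ^ (k - 1) * ∫ ω, (|X ω| + ∫ ω', |X ω'| ∂μ) ^ k ∂μ, by positivity,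
    fun ε ⟨hε, hεR⟩ Y hY hYX ↦ ?_⟩
  calc |centralMoment Y k μ - centralMoment X k μ|
      ≤ k * (1 + ε) ^ (k - 1) * ε * ∫ ω, (|X ω| + ∫ ω', |X ω'| ∂μ) ^ k ∂μ :=
        abs_centralMoment_sub_centralMoment_le_of_abs_sub_le_mul_abs hk hX hY hYX
    _ ≤ k * (1 + |R|) ^ (k - 1) * ε * ∫ ω, (|X ω| + ∫ ω', |X ω'| ∂μ) ^ k ∂μ := by
        gcongr
        exact hεR.trans (le_abs_self R)
    _ = k * (1 + |R|) ^ (k - 1) * (∫ ω, (|X ω| + ∫ ω', |X ω'| ∂μ) ^ k ∂μ) * ε := by ring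

end Measure

theorem centered_moments_first_order_mult
    {Ω : Type*} [MeasurableSpace Ω] (P : Measure Ω) [IsProbabilityMeasure P]
    (k : ℕ) (hk : 1 ≤ k)
    (X : Ω → ℝ) (hX : Measurable X)
    (hmom : Integrable (fun ω => |X ω| ^ k) P) :
    ∃ C : ℝ, 0 ≤ C ∧
      ∀ ε : ℝ, ε ∈ Set.Icc (0 : ℝ) 1 →
        ∀ rd : ℝ → ℝ, Measurable rd → (∀ x : ℝ, |rd x - x| ≤ ε * |x|) →
          |(∫ ω, (rd (X ω) - ∫ ω', rd (X ω') ∂P) ^ k ∂P)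
            - ∫ ω, (X ω - ∫ ω', X ω' ∂P) ^ k ∂P| ≤ C * ε := by
  have hk₀ : k ≠ 0 := Nat.one_le_iff_ne_zero.1 hk
  obtain ⟨C, hC, hbound⟩ := centered_moments_first_order_mult_general hk₀
    ((memLp_natCast_iff_integrable_norm_pow hk₀ hX.aestronglyMeasurable).2 hmom) 1
  exact ⟨C, hC, fun ε hε rd hrd hrd_le ↦ hbound ε hε (fun ω ↦ rd (X ω))
    (hrd.comp hX).aestronglyMeasurable (.of_forall fun ω ↦ hrd_le (X ω))⟩
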